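/- arXiv:2309.16446 — 7 statements merged into one kernel-verified Lean document; each statement's English description precedes it below -/
import Mathlib

section
/- Let A be a commutative Noetherian ring, let a, b ∈ A, assume A is complete and separated for the I-adic topology where I is the ideal generated by a and b, and let N be a finitely generated A-module. Then the sequence {a,b} is strictly N-regular if and only if for all x, y ∈ N with b•x = a•y there exists z ∈ N with x = a•z and y = b•z (equivalently, the first cohomology of the three-term complex N → N ⊕ N → N, with first map x ↦ (a•x, b•x) and second map (x,y) ↦ b•x − a•y, vanishes). Moreover, under these equivalent conditions the zeroth cohomology of this complex also vanishes, i.e. the only x ∈ N with a•x = 0 and b•x = 0 is x = 0. -/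
/-- The sequence `{a, b}` is `N`-regular: multiplication by `a` is injective on `N` and
multiplication by `b` is injective on `N/aN`. -/
def IsSeqRegular {A : Type*} [CommRing A] (a b : A)
    (N : Type*) [AddCommGroup N] [Module A N] : Prop :=
  (∀ x : N, a • x = 0 → x = 0) ∧
    ∀ x : N, (∃ y : N, b • x = a • y) → ∃ z : N, x = a • z

/-- The sequence `{a, b}` is strictly `N`-regular: both `{a, b}` and `{b, a}` are `N`-regular. -/
def IsStrictlySeqRegular {A : Type*} [CommRing A] (a b : A)
    (N : Type*) [AddCommGroup N] [Module A N] : Prop :=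
  IsSeqRegular a b N ∧ IsSeqRegular b a N

/-!
If `b • x = a • y` always forces `(x, y) = (a • z, b • z)`, then taking `x = 0` shows that every
`y` killed by `a` is `b • z` with `z` again killed by `a`. So the `a`-torsion `K` of `N` satisfies
`K = bK`, hence lies in `bⁿN` for every `n`, and vanishes as soon as `N` is `b`-adically separated.
In the theorem this separatedness comes from Krull's intersection theorem, because completeness
puts `a` and `b` in the Jacobson radical of `A`.
-/

theorem eq_bot_of_le_smul_of_isHausdorff {R M : Type*} [CommRing R] [AddCommGroup M] [Module R M]
    (I : Ideal R) [IsHausdorff I M] {K : Submodule R M} (hK : K ≤ I • K) : K = ⊥ := by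
  have le_pow_smul (n : ℕ) : K ≤ I ^ n • K := by
    induction n with
    | zero => simp
    | succ n ih =>
      calc
        K ≤ I ^ n • K := ih
        _ ≤ I ^ n • I • K := smul_mono_right _ hK
        _ = I ^ (n + 1) • K := by rw [pow_succ, Submodule.mul_smul]
  rw [eq_bot_iff, ← IsHausdorff.iInf_pow_smul ‹IsHausdorff I M›]
  exact le_iInf fun n => (le_pow_smul n).trans (smul_mono_right _ le_top)

section KoszulExact

variable {A : Type*} [CommRing A] {a b : A} {N : Type*} [AddCommGroup N] [Module A N]

variable (a b N) in
/-- Vanishing of the first cohomology of the Koszul complex `N → N ⊕ N → N` of `{a, b}` on `N`,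
with maps `x ↦ (a • x, b • x)` and `(x, y) ↦ b • x - a • y`, written out on elements. -/
def KoszulExact : Prop :=
  ∀ x y : N, b • x = a • y → ∃ z : N, x = a • z ∧ y = b • z

theorem IsSeqRegular.koszulExact (h : IsSeqRegular a b N) : KoszulExact a b N := by
  intro x y hxy
  obtain ⟨z, rfl⟩ := h.2 x ⟨y, hxy⟩
  have smul_sub_eq_zero : a • (y - b • z) = 0 := by rw [smul_sub, ← hxy, smul_comm, sub_self]
  exact ⟨z, rfl, sub_eq_zero.mp (h.1 _ smul_sub_eq_zero)⟩

namespace KoszulExact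

theorem symm (h : KoszulExact a b N) : KoszulExact b a N := by
  intro x y hxy
  obtain ⟨z, hy, hx⟩ := h y x hxy.symm
  exact ⟨z, hx, hy⟩

theorem torsionBy_le_smul_torsionBy (h : KoszulExact a b N) :
    Submodule.torsionBy A N a ≤ Ideal.span {b} • Submodule.torsionBy A N a := by
  intro y (hy : a • y = 0)
  obtain ⟨z, hz, rfl⟩ := h 0 y (by rw [smul_zero, hy])
  exact Submodule.smul_mem_smul (Ideal.mem_span_singleton_self b) hz.symm

theorem eq_zero_of_smul_eq_zero [IsHausdorff (Ideal.span {b}) N] (h : KoszulExact a b N) {x : N}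
    (hx : a • x = 0) : x = 0 := by
  have torsion_eq_bot : Submodule.torsionBy A N a = ⊥ :=
    eq_bot_of_le_smul_of_isHausdorff (Ideal.span {b}) h.torsionBy_le_smul_torsionBy
  rwa [← Submodule.mem_torsionBy_iff, torsion_eq_bot, Submodule.mem_bot] at hx

theorem isSeqRegular [IsHausdorff (Ideal.span {b}) N] (h : KoszulExact a b N) :
    IsSeqRegular a b N :=
  ⟨fun _ hx => h.eq_zero_of_smul_eq_zero hx,
    fun x ⟨y, hxy⟩ => (h x y hxy).imp fun _ hz => hz.1⟩

end KoszulExact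

end KoszulExact

theorem isStrictlySeqRegular_iff_H1_eq_zero_general
    {A : Type*} [CommRing A] (a b : A) (N : Type*) [AddCommGroup N] [Module A N]
    [IsHausdorff (Ideal.span {a}) N] [IsHausdorff (Ideal.span {b}) N] :
    (IsStrictlySeqRegular a b N ↔ KoszulExact a b N) ∧
      (KoszulExact a b N → ∀ x : N, a • x = 0 → b • x = 0 → x = 0) :=
  ⟨⟨fun h => h.1.koszulExact, fun h => ⟨h.isSeqRegular, h.symm.isSeqRegular⟩⟩,
    fun h _ hax _ => h.eq_zero_of_smul_eq_zero hax⟩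

theorem isHausdorff_of_le_of_isAdicComplete {A : Type*} [CommRing A] [IsNoetherianRing A]
    {I J : Ideal A} [IsAdicComplete I A] (hJI : J ≤ I)
    (N : Type*) [AddCommGroup N] [Module A N] [Module.Finite A N] : IsHausdorff J N :=
  .of_le_jacobson J N (hJI.trans (IsAdicComplete.le_jacobson_bot I))

/-- Let `A` be a commutative Noetherian ring, complete and separated for the `(a, b)`-adic
topology, and let `N` be a finitely generated `A`-module.  Then `{a, b}` is strictly
`N`-regular if and only if the first cohomology of the complex
`N → N ⊕ N → N`, `x ↦ (a•x, b•x)`, `(x, y) ↦ b•x - a•y` vanishes, i.e. whenever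
`b • x = a • y` there is `z` with `x = a • z` and `y = b • z`.  Moreover, under these
equivalent conditions the zeroth cohomology also vanishes: `a • x = 0` and `b • x = 0`
imply `x = 0`. -/
theorem isStrictlySeqRegular_iff_H1_eq_zero
    {A : Type*} [CommRing A] [IsNoetherianRing A] (a b : A)
    [IsAdicComplete (Ideal.span {a, b}) A]
    (N : Type*) [AddCommGroup N] [Module A N] [Module.Finite A N] :
    (IsStrictlySeqRegular a b N ↔
      ∀ x y : N, b • x = a • y → ∃ z : N, x = a • z ∧ y = b • z) ∧
    ((∀ x y : N, b • x = a • y → ∃ z : N, x = a • z ∧ y = b • z) →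
      ∀ x : N, a • x = 0 → b • x = 0 → x = 0) := by
  have isHausdorff_a : IsHausdorff (Ideal.span {a}) N :=
    isHausdorff_of_le_of_isAdicComplete (I := Ideal.span {a, b}) (Ideal.span_mono (by simp)) N
  have isHausdorff_b : IsHausdorff (Ideal.span {b}) N :=
    isHausdorff_of_le_of_isAdicComplete (I := Ideal.span {a, b}) (Ideal.span_mono (by simp)) N
  exact isStrictlySeqRegular_iff_H1_eq_zero_general a b N
end

section
/- Let A be a commutative ring, let a, b ∈ A, and let N be an A-module. If multiplication by b is injective on N and multiplication by a is injective on N/bN, then multiplication by b is injective on N/aN; that is, for x, y ∈ N with b•x = a•y there exists z ∈ N with x = a•z. -/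
/-- For additive endomorphisms, `hf` says that `f` is injective on the cokernel of `g`, and the
conclusion that `g` is injective on the cokernel of `f`. -/
theorem mul_injective_mod_a_of_mul_injective_mod_b_general
    {α : Type*} {f g : α → α} (hfg : Function.Commute f g) (hg : Function.Injective g)
    (hf : ∀ x y, f x = g y → ∃ z, x = g z) :
    ∀ x y, g x = f y → ∃ z, x = f z := by
  intro x y hxy
  obtain ⟨z, rfl⟩ := hf y x hxy.symm
  have hgx : g x = g (f z) := hxy.trans (hfg z)
  exact ⟨z, hg hgx⟩

/-- If multiplication by `b` is injective on `N` and multiplication by `a` is injective on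
`N/bN`, then multiplication by `b` is injective on `N/aN`: for `x y : N` with `b • x = a • y`
there exists `z : N` with `x = a • z`. -/
theorem mul_injective_mod_a_of_mul_injective_mod_b
    {A : Type*} [CommRing A] (a b : A)
    (N : Type*) [AddCommGroup N] [Module A N]
    (hb : ∀ x : N, b • x = 0 → x = 0)
    (ha : ∀ x : N, (∃ y : N, a • x = b • y) → ∃ z : N, x = b • z) :
    ∀ x y : N, b • x = a • y → ∃ z : N, x = a • z :=
  mul_injective_mod_a_of_mul_injective_mod_b_general (smul_comm a b)
    (IsSMulRegular.of_right_eq_zero_of_smul hb) fun x y hxy ↦ ha x ⟨y, hxy⟩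
end

section
/- Let A be a commutative ring, let a, b ∈ A, and let N be a finitely generated A-module such that the sequence {a,b} is strictly N-regular. Then N equals the intersection of N[1/a] and N[1/b] inside N[1/(ab)]: the canonical maps N → N[1/a], N → N[1/b], N[1/a] → N[1/(ab)] and N[1/b] → N[1/(ab)] are injective, and whenever u ∈ N[1/a] and v ∈ N[1/b] have the same image in N[1/(ab)], there exists a unique w ∈ N whose images in N[1/a] and N[1/b] are u and v respectively. -/
/-!
Write `u = x / a ^ n` and `v = y / b ^ m`. Since `a` and `b` act injectively, `N` embeds in
`N[1/(ab)]`, so equality of the images there already gives `b ^ m • x = a ^ n • y` in `N`.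
Regularity of a pair passes to powers, so `{a ^ n, b ^ m}` is `N`-regular; hence `x = a ^ n • w`,
and `w` is the required common preimage.
-/

namespace IsSeqRegular

variable {A N : Type*} [CommRing A] [AddCommGroup N] [Module A N] {a a' b b' : A}

theorem isSMulRegular_left (h : IsSeqRegular a b N) : IsSMulRegular N a :=
  isSMulRegular_iff_right_eq_zero_of_smul.mpr h.1

theorem mul_left (h : IsSeqRegular a b N) (h' : IsSeqRegular a' b N) :
    IsSeqRegular (a * a') b N := by
  refine ⟨fun x hx ↦ h'.1 x (h.1 _ (by rwa [← mul_smul])), ?_⟩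
  rintro x ⟨y, hxy⟩
  obtain ⟨z, rfl⟩ := h.2 x ⟨a' • y, by rw [hxy, mul_smul]⟩
  have hzy : b • z = a' • y :=
    h.isSMulRegular_left (by simpa only [mul_smul, smul_comm b a] using hxy)
  obtain ⟨w, rfl⟩ := h'.2 z ⟨y, hzy⟩
  exact ⟨w, (mul_smul a a' w).symm⟩

theorem mul_right (h : IsSeqRegular a b N) (h' : IsSeqRegular a b' N) :
    IsSeqRegular a (b * b') N := by
  refine ⟨h.1, ?_⟩
  rintro x ⟨y, hxy⟩
  exact h'.2 x (h.2 (b' • x) ⟨y, by rw [← mul_smul, hxy]⟩)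

theorem pow_left (h : IsSeqRegular a b N) (n : ℕ) : IsSeqRegular (a ^ n) b N := by
  induction n with
  | zero => exact ⟨fun x hx ↦ by simpa using hx, fun x _ ↦ ⟨x, by simp⟩⟩
  | succ n ih => exact pow_succ a n ▸ ih.mul_left h

theorem pow_right (h : IsSeqRegular a b N) (m : ℕ) : IsSeqRegular a (b ^ m) N := by
  induction m with
  | zero => exact ⟨h.1, fun x ⟨y, hxy⟩ ↦ ⟨y, by simpa using hxy⟩⟩
  | succ m ih => exact pow_succ b m ▸ ih.mul_right h

theorem pow (h : IsSeqRegular a b N) (n m : ℕ) : IsSeqRegular (a ^ n) (b ^ m) N :=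
  (h.pow_left n).pow_right m

end IsSeqRegular

section Localization

variable {R N M M' P : Type*} [CommSemiring R]
  [AddCommMonoid N] [Module R N] [AddCommMonoid M] [Module R M]
  [AddCommMonoid M'] [Module R M'] [AddCommMonoid P] [Module R P]

theorem injective_of_isLocalizedModule_powers {c : R} (hc : IsSMulRegular N c)
    (f : N →ₗ[R] M) [IsLocalizedModule (Submonoid.powers c) f] : Function.Injective f := by
  rw [IsLocalizedModule.injective_iff_isRegular (Submonoid.powers c)]
  rintro ⟨_, n, rfl⟩
  exact hc.pow n

theorem injective_of_injective_comp_isLocalizedModule (S : Submonoid R) (f : N →ₗ[R] M)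
    [IsLocalizedModule S f] {g : M →ₗ[R] P} (h : Function.Injective (g ∘ₗ f)) :
    Function.Injective g :=
  IsLocalizedModule.injective_of_map_eq S f fun hxy ↦ congrArg f (h hxy)

theorem existsUnique_of_isLocalizedModule_of_map_eq (S T : Submonoid R)
    {f : N →ₗ[R] M} [IsLocalizedModule S f] {f' : N →ₗ[R] M'} [IsLocalizedModule T f']
    {g : M →ₗ[R] P} {g' : M' →ₗ[R] P} (hcomm : g ∘ₗ f = g' ∘ₗ f')
    (hinj : Function.Injective (g ∘ₗ f))
    (hdvd : ∀ (s : S) (t : T) (x : N), (∃ y : N, t • x = s • y) → ∃ z : N, x = s • z)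
    {u : M} {v : M'} (huv : g u = g' v) : ∃! w : N, f w = u ∧ f' w = v := by
  have hcomm_apply (x : N) : g (f x) = g' (f' x) := LinearMap.congr_fun hcomm x
  have hg' : Function.Injective g' :=
    injective_of_injective_comp_isLocalizedModule T f' (hcomm ▸ hinj)
  obtain ⟨⟨x, s⟩, hx : s • u = f x⟩ := IsLocalizedModule.surj S f u
  obtain ⟨⟨y, t⟩, hy : t • v = f' y⟩ := IsLocalizedModule.surj T f' v
  have hxy : t • x = s • y := hinj <| calc
    g (f (t • x)) = t • s • g u := by simp only [LinearMap.map_smul_of_tower, ← hx]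
    _ = s • t • g' v := by rw [smul_comm, huv]
    _ = g (f (s • y)) := by simp only [hcomm_apply, LinearMap.map_smul_of_tower, ← hy]
  obtain ⟨w, rfl⟩ := hdvd s t x ⟨y, hxy⟩
  have hwu : f w = u :=
    IsLocalizedModule.smul_injective f s (by simpa only [LinearMap.map_smul_of_tower] using hx.symm)
  have hwv : f' w = v := hg' (by rw [← hcomm_apply, hwu, huv])
  exact ⟨w, ⟨hwu, hwv⟩, fun w' hw' ↦ hinj (congrArg g (hw'.1.trans hwu.symm))⟩

end Localization

theorem eq_inter_of_isStrictlySeqRegular_general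
    {A : Type*} [CommRing A] (a b : A)
    (N : Type*) [AddCommGroup N] [Module A N]
    (hab : IsSeqRegular a b N) (hb : IsSMulRegular N b)
    (Na Nb Nab : Type*)
    [AddCommGroup Na] [Module A Na] [AddCommGroup Nb] [Module A Nb]
    [AddCommGroup Nab] [Module A Nab]
    (fa : N →ₗ[A] Na) (fb : N →ₗ[A] Nb) (fab : N →ₗ[A] Nab)
    [IsLocalizedModule (Submonoid.powers a) fa]
    [IsLocalizedModule (Submonoid.powers b) fb]
    [IsLocalizedModule (Submonoid.powers (a * b)) fab]
    (ga : Na →ₗ[A] Nab) (gb : Nb →ₗ[A] Nab)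
    (hga : ga ∘ₗ fa = fab) (hgb : gb ∘ₗ fb = fab) :
    Function.Injective fa ∧ Function.Injective fb ∧
    Function.Injective ga ∧ Function.Injective gb ∧
    ∀ (u : Na) (v : Nb), ga u = gb v → ∃! w : N, fa w = u ∧ fb w = v := by
  subst hga
  have hinj : Function.Injective (ga ∘ₗ fa) :=
    injective_of_isLocalizedModule_powers (hab.isSMulRegular_left.mul hb) (ga ∘ₗ fa)
  have hinj' : Function.Injective (gb ∘ₗ fb) := hgb ▸ hinj
  refine ⟨.of_comp hinj, .of_comp hinj',
    injective_of_injective_comp_isLocalizedModule (.powers a) fa hinj,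
    injective_of_injective_comp_isLocalizedModule (.powers b) fb hinj', fun u v huv ↦ ?_⟩
  refine existsUnique_of_isLocalizedModule_of_map_eq (.powers a) (.powers b) hgb.symm hinj ?_ huv
  rintro ⟨_, n, rfl⟩ ⟨_, m, rfl⟩
  exact (hab.pow n m).2

/-- If `{a, b}` is strictly `N`-regular, then `N = N[1/a] ∩ N[1/b]` inside `N[1/(ab)]`:
the canonical maps `N → N[1/a]`, `N → N[1/b]`, `N[1/a] → N[1/(ab)]`, `N[1/b] → N[1/(ab)]`
are injective, and any pair of elements of `N[1/a]` and `N[1/b]` agreeing in `N[1/(ab)]`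
comes from a unique element of `N`. -/
theorem eq_inter_of_isStrictlySeqRegular
    {A : Type*} [CommRing A] (a b : A)
    (N : Type*) [AddCommGroup N] [Module A N] [Module.Finite A N]
    (hreg : IsStrictlySeqRegular a b N)
    (Na Nb Nab : Type*)
    [AddCommGroup Na] [Module A Na] [AddCommGroup Nb] [Module A Nb]
    [AddCommGroup Nab] [Module A Nab]
    (fa : N →ₗ[A] Na) (fb : N →ₗ[A] Nb) (fab : N →ₗ[A] Nab)
    [IsLocalizedModule (Submonoid.powers a) fa]
    [IsLocalizedModule (Submonoid.powers b) fb]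
    [IsLocalizedModule (Submonoid.powers (a * b)) fab]
    (ga : Na →ₗ[A] Nab) (gb : Nb →ₗ[A] Nab)
    (hga : ga ∘ₗ fa = fab) (hgb : gb ∘ₗ fb = fab) :
    Function.Injective fa ∧ Function.Injective fb ∧
    Function.Injective ga ∧ Function.Injective gb ∧
    ∀ (u : Na) (v : Nb), ga u = gb v → ∃! w : N, fa w = u ∧ fb w = v :=
  eq_inter_of_isStrictlySeqRegular_general a b N hreg.1 hreg.2.isSMulRegular_left Na Nb Nab
    fa fb fab ga gb hga hgb
end

section
/- Let A be a commutative ring, let a, b ∈ A, and let N be a finitely generated A-module such that the sequence {a,b} is strictly N-regular. Then for every x ∈ N and every n ∈ ℕ, if the image of x under the canonical map N → N[1/b] lies in the submodule aⁿ·N[1/b], then x ∈ aⁿ·N. -/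
/-!
Two facts combine. Regularity of `b` passes from `N/aN` to `N/aⁿN`: if `b x = aⁿ⁺¹ y`, then
`x = a x'`, and cancelling `a` leaves `b x' = aⁿ y`. On the other hand, `N/P` embeds into its
localization at `S` as soon as every element of `S` is regular on `N/P`, so membership in `P` can
then be tested after localizing; this is applied to `P = aⁿN` and the powers of `b`.
-/

section

open scoped Pointwise

variable {A N : Type*} [CommRing A] [AddCommGroup N] [Module A N] {a b : A}

theorem isSeqRegular_iff :
    IsSeqRegular a b N ↔ IsSMulRegular N a ∧ IsSMulRegular (QuotSMulTop a N) b := by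
  simp only [IsSeqRegular, isSMulRegular_iff_right_eq_zero_of_smul (M := N),
    isSMulRegular_quotient_iff_mem_of_smul_mem, Submodule.mem_smul_pointwise_iff_exists,
    Submodule.mem_top, true_and, eq_comm]

theorem isSMulRegular_quotient_smul {P : Submodule A N} (ha : IsSMulRegular N a)
    (hb : IsSMulRegular (QuotSMulTop a N) b) (hP : IsSMulRegular (N ⧸ P) b) :
    IsSMulRegular (N ⧸ a • P) b := by
  refine (isSMulRegular_quotient_iff_mem_of_smul_mem _ b).mpr fun x hx ↦ ?_
  obtain ⟨y, hy, hxy⟩ := (Submodule.mem_smul_pointwise_iff_exists _ _ _).mp hx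
  have hx_mem : x ∈ a • (⊤ : Submodule A N) := by
    refine mem_of_isSMulRegular_quotient_of_smul_mem hb ?_
    exact hxy ▸ Submodule.smul_mem_pointwise_smul y a ⊤ Submodule.mem_top
  obtain ⟨x', -, rfl⟩ := (Submodule.mem_smul_pointwise_iff_exists _ _ _).mp hx_mem
  have hyx' : y = b • x' := ha (hxy.trans (smul_comm b a x'))
  have hx' : x' ∈ P := mem_of_isSMulRegular_quotient_of_smul_mem hP (hyx' ▸ hy)
  exact Submodule.smul_mem_pointwise_smul x' a P hx'

theorem isSMulRegular_quotient_pow_smul_top (ha : IsSMulRegular N a)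
    (hb : IsSMulRegular (QuotSMulTop a N) b) (n : ℕ) :
    IsSMulRegular (N ⧸ a ^ n • (⊤ : Submodule A N)) b := by
  induction n with
  | zero =>
    rw [pow_zero, one_smul]
    exact Function.injective_of_subsingleton _
  | succ n ih =>
    rw [pow_succ', mul_smul]
    exact isSMulRegular_quotient_smul ha hb ih

theorem localized₀_pointwise_smul {A N N' : Type*} [CommSemiring A] [AddCommMonoid N]
    [Module A N] [AddCommMonoid N'] [Module A N']
    (S : Submonoid A) (f : N →ₗ[A] N') [IsLocalizedModule S f] (r : A) (P : Submodule A N) :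
    (r • P).localized₀ S f = r • P.localized₀ S f := by
  rw [← Submodule.ideal_span_singleton_smul, Submodule.localized₀_smul,
    Submodule.ideal_span_singleton_smul]

variable {N' : Type*} [AddCommMonoid N'] [Module A N']

theorem mem_of_map_mem_localized₀ {S : Submonoid A} {f : N →ₗ[A] N'} [IsLocalizedModule S f]
    {P : Submodule A N} (hS : ∀ s ∈ S, IsSMulRegular (N ⧸ P) s) {x : N}
    (hx : f x ∈ P.localized₀ S f) : x ∈ P := by
  obtain ⟨m, hm, s, hms⟩ := hx
  have h_eq : f m = f (s • x) := by
    rw [Submonoid.smul_def, map_smul]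
    exact IsLocalizedModule.mk'_eq_iff.mp hms
  obtain ⟨c, hc⟩ := IsLocalizedModule.exists_of_eq (S := S) h_eq
  have hcsx : c • s • x ∈ P := hc ▸ P.smul_mem (c : A) hm
  have hsx : s • x ∈ P := mem_of_isSMulRegular_quotient_of_smul_mem (hS c c.2) hcsx
  exact mem_of_isSMulRegular_quotient_of_smul_mem (hS s s.2) hsx

theorem mem_pow_smul_of_localization_mem_pow_smul_general (hreg : IsSeqRegular a b N)
    (f : N →ₗ[A] N') [IsLocalizedModule.Away b f] {x : N} {n : ℕ} (h : ∃ y : N', f x = a ^ n • y) :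
    ∃ z : N, x = a ^ n • z := by
  obtain ⟨ha, hb⟩ := isSeqRegular_iff.mp hreg
  have hpow : ∀ s ∈ Submonoid.powers b, IsSMulRegular (QuotSMulTop (a ^ n) N) s := by
    rintro _ ⟨k, rfl⟩
    exact (isSMulRegular_quotient_pow_smul_top ha hb n).pow k
  obtain ⟨y, hy⟩ := h
  have hfx : f x ∈ (a ^ n • (⊤ : Submodule A N)).localized₀ (.powers b) f := by
    rw [localized₀_pointwise_smul, Submodule.localized₀_top, hy]
    exact Submodule.smul_mem_pointwise_smul y (a ^ n) ⊤ Submodule.mem_top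
  obtain ⟨z, -, hz⟩ :=
    (Submodule.mem_smul_pointwise_iff_exists _ _ _).mp (mem_of_map_mem_localized₀ hpow hfx)
  exact ⟨z, hz.symm⟩

end

/-- If `{a, b}` is strictly `N`-regular, and the image of `x : N` in the localization
`N[1/b]` lies in `aⁿ • N[1/b]`, then `x ∈ aⁿ • N`. -/
theorem mem_pow_smul_of_localization_mem_pow_smul
    {A : Type*} [CommRing A] (a b : A)
    (N : Type*) [AddCommGroup N] [Module A N] [Module.Finite A N]
    (hreg : IsStrictlySeqRegular a b N) (x : N) (n : ℕ)
    (h : ∃ y : LocalizedModule (Submonoid.powers b) N,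
      LocalizedModule.mkLinearMap (Submonoid.powers b) N x = a ^ n • y) :
    ∃ z : N, x = a ^ n • z :=
  mem_pow_smul_of_localization_mem_pow_smul_general hreg.1 _ h
end

section
/- Let A be a commutative ring, let p be a prime number, and let 𝔭 ⊂ A be a prime ideal with p ∈ 𝔭. If the p-power map x ↦ x^p is surjective on A/pA, then the p-power map x ↦ x^p is surjective on A_𝔭/pA_𝔭, where A_𝔭 denotes the localization of A at the prime 𝔭. -/
theorem pow_surjective_of_localizationMap {M N : Type*} [CommMonoid M] [CommMonoid N]
    {S : Submonoid M} (f : S.LocalizationMap N) {n : ℕ}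
    (h : Function.Surjective fun x : M => x ^ n) :
    Function.Surjective fun x : N => x ^ n := by
  intro z
  obtain ⟨a, s, rfl⟩ := f.mk'_surjective z
  obtain rfl | hn := eq_or_ne n 0
  · have eq_one (x : M) : x = 1 := by
      obtain ⟨_, rfl⟩ := h x
      exact pow_zero _
    obtain rfl : a = s := (eq_one a).trans (eq_one s).symm
    exact ⟨1, (pow_zero 1).trans (f.mk'_self' s).symm⟩
  · -- Write `a / s = (a * s ^ (n - 1)) / s ^ n`, whose denominator is already an `n`-th power.
    obtain ⟨b, hb : b ^ n = a * s ^ (n - 1)⟩ := h (a * s ^ (n - 1))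
    refine ⟨f.mk' b s, (f.map_units s).pow n |>.mul_right_cancel ?_⟩
    calc f.mk' b s ^ n * f s ^ n
        = f (b ^ n) := by rw [← mul_pow, f.mk'_spec, map_pow]
      _ = f a * f s ^ (n - 1) := by rw [hb, map_mul, map_pow]
      _ = f.mk' a s * f s ^ n := by rw [← f.mk'_spec a s, mul_assoc, mul_pow_sub_one hn]

theorem pow_p_surjective_localization_atPrime_general {A B : Type*} [CommRing A] [CommRing B]
    [Algebra A B] (M : Submonoid A) [IsLocalization M B] (I : Ideal A) {n : ℕ}
    (h : Function.Surjective fun x : A ⧸ I => x ^ n) :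
    Function.Surjective fun x : B ⧸ I.map (algebraMap A B) => x ^ n :=
  pow_surjective_of_localizationMap
    (IsLocalization.toLocalizationMap (Algebra.algebraMapSubmonoid (A ⧸ I) M) _) h

/-- If the `p`-power map is surjective on `A/pA`, then it is surjective on
`A_𝔭/pA_𝔭`, for any prime ideal `𝔭` of `A` containing the prime number `p`. -/
theorem pow_p_surjective_localization_atPrime
    {A : Type*} [CommRing A] (p : ℕ) (hp : p.Prime)
    (𝔭 : Ideal A) [𝔭.IsPrime] (hp𝔭 : (p : A) ∈ 𝔭)
    (h : Function.Surjective fun x : A ⧸ Ideal.span {(p : A)} => x ^ p) :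
    Function.Surjective
      fun x : Localization.AtPrime 𝔭 ⧸ Ideal.span {(p : Localization.AtPrime 𝔭)} => x ^ p := by
  rw [← map_natCast (algebraMap A (Localization.AtPrime 𝔭)) p, ← Set.image_singleton,
    ← Ideal.map_span]
  exact pow_p_surjective_localization_atPrime_general 𝔭.primeCompl _ h
end

section
/- Let A be a commutative Noetherian ring and let a ∈ A. Let Â denote the a-adic completion of A (the inverse limit of A/aⁿA) and A[1/a] the localization of A away from a. Then the canonical ring homomorphism A → Â × A[1/a] is faithfully flat. -/
/-!
`Spec A` is the union of the closed set `V(a)` and the open set `D(a)`. The set `D(a)` is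
the image of `Spec A[1/a]`, while `V(a) = Spec A/(a)` lies in the image of `Spec Â` because
`A → A/(a)` factors through `Â`. Hence `Spec (Â × A[1/a]) → Spec A` is surjective, and a flat
algebra with this property is faithfully flat.
-/

open PrimeSpectrum TensorProduct

section FlatProd

variable {R M N : Type*} [CommSemiring R] [AddCommMonoid M] [Module R M]
  [AddCommMonoid N] [Module R N]

theorem prodLeft_comp_lTensor {P Q : Type*} [AddCommMonoid P] [Module R P]
    [AddCommMonoid Q] [Module R Q] (f : P →ₗ[R] Q) :
    (prodLeft R R M N Q).toLinearMap ∘ₗ f.lTensor (M × N) =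
      (f.lTensor M).prodMap (f.lTensor N) ∘ₗ (prodLeft R R M N P).toLinearMap := by
  ext <;> simp

theorem flat_prod [Module.Flat R M] [Module.Flat R N] : Module.Flat R (M × N) := by
  refine Module.Flat.iff_lTensor_injectiveₛ.mpr fun P _ _ K ↦ ?_
  have hM := Module.Flat.lTensor_preserves_injective_linearMap (M := M) _ K.injective_subtype
  have hN := Module.Flat.lTensor_preserves_injective_linearMap (M := N) _ K.injective_subtype
  have hcomp : Function.Injective
      ((prodLeft R R M N P).toLinearMap ∘ₗ K.subtype.lTensor (M × N)) := by
    rw [prodLeft_comp_lTensor]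
    exact (hM.prodMap hN).comp (prodLeft R R M N K).injective
  rw [LinearMap.coe_comp] at hcomp
  exact hcomp.of_comp

end FlatProd

theorem range_comap_algebraMap_subset_of_algHom {R S T : Type*} [CommSemiring R] [CommSemiring S]
    [CommSemiring T] [Algebra R S] [Algebra R T] (f : S →ₐ[R] T) :
    Set.range (comap (algebraMap R T)) ⊆ Set.range (comap (algebraMap R S)) := by
  rw [← f.comp_algebraMap, comap_comp]
  exact Set.range_comp_subset_range _ _

theorem range_comap_algebraMap_quotient {R : Type*} [CommRing R] (I : Ideal R) :
    Set.range (comap (algebraMap R (R ⧸ I))) = zeroLocus (I : Set R) := by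
  rw [Ideal.Quotient.algebraMap_eq, range_comap_of_surjective _ _ Ideal.Quotient.mk_surjective,
    Ideal.mk_ker]

theorem faithfullyFlat_adicCompletion_prod_localizationAway_general {A B S : Type*} [CommRing A]
    [CommRing B] [CommRing S] [Algebra A B] [Algebra A S] [Module.Flat A B] (a : A)
    [IsLocalization.Away a S] (f : B →ₐ[A] A ⧸ Ideal.span {a}) :
    Module.FaithfullyFlat A (B × S) := by
  have : Module.Flat A S := IsLocalization.flat S (Submonoid.powers a)
  have : Module.Flat A (B × S) := flat_prod
  refine .of_comap_surjective fun p ↦ ?_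
  by_cases ha : a ∈ p.asIdeal
  · have hp : p ∈ Set.range (comap (algebraMap A (A ⧸ Ideal.span {a}))) := by
      rwa [range_comap_algebraMap_quotient, zeroLocus_span, mem_zeroLocus,
        Set.singleton_subset_iff]
    exact range_comap_algebraMap_subset_of_algHom (f.comp (AlgHom.fst A B S)) hp
  · have hp : p ∈ Set.range (comap (algebraMap A S)) := by
      rwa [localization_away_comap_range S a]
    exact range_comap_algebraMap_subset_of_algHom (AlgHom.snd A B S) hp

/-- For a commutative Noetherian ring `A` and `a ∈ A`, the canonical ring homomorphism
`A → Â × A[1/a]`, where `Â` is the `a`-adic completion of `A` and `A[1/a]` the localization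
away from `a`, is faithfully flat. -/
theorem faithfullyFlat_adicCompletion_prod_localizationAway
    {A : Type*} [CommRing A] [IsNoetherianRing A] (a : A) :
    Module.FaithfullyFlat A (AdicCompletion (Ideal.span {a}) A × Localization.Away a) :=
  faithfullyFlat_adicCompletion_prod_localizationAway_general a (AdicCompletion.evalOneₐ _)
end

section
/- Let A be a commutative Noetherian ring, let a ∈ A, let Â denote the a-adic completion of A, and let M be a finitely generated A-module. If the base change Â ⊗_A M is a projective Â-module and the localization M[1/a] = A[1/a] ⊗_A M is a projective A[1/a]-module, then M is a projective A-module (hence finite projective). -/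
open TensorProduct

/-!
For an ideal `I = (s)` of a Noetherian ring `A`, the flat `A`-algebras `Â` (the `I`-adic completion)
and `A[1/f]`, `f ∈ s`, jointly cover the maximal spectrum: a maximal ideal containing `I` extends to
a proper ideal of `Â`, since `Â` surjects onto `A/I`, and any other one misses some `f ∈ s`, hence
extends to a proper ideal of `A[1/f]`. A direct sum of such modules is faithfully flat, so flatness
descends along it; for finitely presented modules, flat means projective.
-/

open scoped DirectSum

section Descent

variable {A : Type*} [CommRing A]

theorem faithfullyFlat_directSum_of_smul_top_ne_top {ι : Type*} (N : ι → Type*)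
    [∀ i, AddCommGroup (N i)] [∀ i, Module A (N i)] [∀ i, Module.Flat A (N i)]
    (h : ∀ m : Ideal A, m.IsMaximal → ∃ i, m • (⊤ : Submodule A (N i)) ≠ ⊤) :
    Module.FaithfullyFlat A (⨁ i, N i) where
  submodule_ne_top m hm htop := by
    classical
    obtain ⟨i, hi⟩ := h m hm
    have hrange : LinearMap.range (DirectSum.component A ι N i) = ⊤ :=
      LinearMap.range_eq_top.mpr fun x ↦ ⟨DirectSum.lof A ι N i x, DirectSum.component.lof_self ..⟩
    apply hi
    rw [← hrange, ← Submodule.map_top, ← Submodule.map_smul'', htop]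

variable {M : Type*} [AddCommGroup M] [Module A M]

theorem flat_of_flat_tensorProduct_of_faithfullyFlat (N : Type*) [AddCommGroup N] [Module A N]
    [Module.FaithfullyFlat A N] [Module.Flat A (N ⊗[A] M)] : Module.Flat A M := by
  rw [Module.Flat.iff_lTensor_injective']
  intro J
  rw [← Module.FaithfullyFlat.lTensor_injective_iff_injective A N]
  have hinj : Function.Injective (J.subtype.lTensor (N ⊗[A] M)) :=
    Module.Flat.lTensor_preserves_injective_linearMap _ J.subtype_injective
  simpa [LinearMap.lTensor_tensor] using hinj

theorem flat_of_forall_isMaximal_exists_flat_baseChange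
    (h : ∀ m : Ideal A, m.IsMaximal → ∃ (B : Type*) (_ : CommRing B) (_ : Algebra A B),
      Module.Flat A B ∧ m.map (algebraMap A B) ≠ ⊤ ∧ Module.Flat B (B ⊗[A] M)) :
    Module.Flat A M := by
  classical
  choose B _ _ hflat hne hbaseChange using h
  let F (m : MaximalSpectrum A) := B m.asIdeal m.isMaximal
  have : Module.FaithfullyFlat A (⨁ m, F m) :=
    faithfullyFlat_directSum_of_smul_top_ne_top F fun m hm ↦
      ⟨⟨m, hm⟩, by simpa [F, Ideal.smul_top_eq_map] using hne m hm⟩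
  have (m : MaximalSpectrum A) : Module.Flat A (F m ⊗[A] M) := .trans A (F m) (F m ⊗[A] M)
  have : Module.Flat A ((⨁ m, F m) ⊗[A] M) :=
    .of_linearEquiv (TensorProduct.directSumLeft A A F M)
  exact flat_of_flat_tensorProduct_of_faithfullyFlat (⨁ m, F m)

end Descent

section CompletionAndLocalization

variable {A : Type*} [CommRing A]

theorem map_algebraMap_adicCompletion_ne_top {I J : Ideal A} (hIJ : I ≤ J) (hJ : J ≠ ⊤) :
    J.map (algebraMap A (AdicCompletion I A)) ≠ ⊤ := by
  intro htop
  have hquot : J.map (Ideal.Quotient.mk I) = ⊤ := by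
    rw [← AdicCompletion.evalOneₐ_comp_algebraMap_eq_mk, ← Ideal.map_map, htop, Ideal.map_top]
  apply hJ
  rw [← Ideal.comap_map_mk hIJ, hquot, Ideal.comap_top]

theorem map_algebraMap_ne_top_of_isLocalizationAway {J : Ideal A} (hJ : J.IsRadical) {f : A}
    (hf : f ∉ J) (B : Type*) [CommRing B] [Algebra A B] [IsLocalization.Away f B] :
    J.map (algebraMap A B) ≠ ⊤ :=
  (IsLocalization.map_algebraMap_ne_top_iff_disjoint (Submonoid.powers f) B J).mpr <|
    (Ideal.disjoint_powers_iff_notMem f hJ).mpr hf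

theorem flat_of_adicCompletion_of_localizationAway [IsNoetherianRing A] (s : Set A)
    (M : Type*) [AddCommGroup M] [Module A M]
    (hcompletion : Module.Flat (AdicCompletion (Ideal.span s) A)
      (AdicCompletion (Ideal.span s) A ⊗[A] M))
    (hlocalization : ∀ f ∈ s, Module.Flat (Localization.Away f) (Localization.Away f ⊗[A] M)) :
    Module.Flat A M := by
  refine flat_of_forall_isMaximal_exists_flat_baseChange fun m hm ↦ ?_
  by_cases hs : s ⊆ m
  · exact ⟨AdicCompletion (Ideal.span s) A, _, _, inferInstance,
      map_algebraMap_adicCompletion_ne_top (Ideal.span_le.mpr hs) hm.ne_top, hcompletion⟩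
  · obtain ⟨f, hfs, hfm⟩ := Set.not_subset.mp hs
    exact ⟨Localization.Away f, _, _, IsLocalization.flat _ (Submonoid.powers f),
      map_algebraMap_ne_top_of_isLocalizationAway hm.isPrime.isRadical hfm _, hlocalization f hfs⟩

end CompletionAndLocalization

theorem projective_of_completion_and_localization_projective_general
    {A : Type*} [CommRing A] [IsNoetherianRing A] (s : Set A)
    (M : Type*) [AddCommGroup M] [Module A M] [Module.Finite A M]
    (hcompletion : Module.Projective (AdicCompletion (Ideal.span s) A)
      (AdicCompletion (Ideal.span s) A ⊗[A] M))
    (hlocalization : ∀ f ∈ s,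
      Module.Projective (Localization.Away f) (Localization.Away f ⊗[A] M)) :
    Module.Projective A M := by
  have : Module.Flat A M := flat_of_adicCompletion_of_localizationAway s M inferInstance
    fun f hf ↦ have := hlocalization f hf; inferInstance
  have : Module.FinitePresentation A M := Module.finitePresentation_of_finite A M
  exact Module.Flat.projective_of_finitePresentation

/-- Let `A` be a commutative Noetherian ring, `a ∈ A`, `Â` the `a`-adic completion of `A`,
and `M` a finitely generated `A`-module.  If `Â ⊗_A M` is projective over `Â` and
`A[1/a] ⊗_A M` is projective over `A[1/a]`, then `M` is projective over `A`. -/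
theorem projective_of_completion_and_localization_projective
    {A : Type*} [CommRing A] [IsNoetherianRing A] (a : A)
    (M : Type*) [AddCommGroup M] [Module A M] [Module.Finite A M]
    (h1 : Module.Projective (AdicCompletion (Ideal.span {a}) A)
      (AdicCompletion (Ideal.span {a}) A ⊗[A] M))
    (h2 : Module.Projective (Localization.Away a) (Localization.Away a ⊗[A] M)) :
    Module.Projective A M :=
  projective_of_completion_and_localization_projective_general {a} M h1 (by simpa using h2)
end
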